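/- For every δ∈(0,1) and every ν∈𝒫(V), I_δ(ν)=I₁(ν). -/

import Mathlib

open scoped BigOperators Classical ENNReal
open Filter Topology

noncomputable section
namespace ORRW

/-- Probability measures on a finite type `A`, topologized as a subset of `ℝ^A`. -/
abbrev ProbMeas (A : Type) [Fintype A] : Type :=
  {p : A → ℝ // (∀ a, 0 ≤ p a) ∧ ∑ a, p a = 1}

/-- Relative entropy `R(γ‖ρ)` between two finitely supported "rows", valued in `EReal`,
with `+∞` when absolute continuity fails. -/
def relEnt {A : Type} [Fintype A] (γ ρ : A → ℝ) : EReal :=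
  if ∀ a, ρ a = 0 → γ a = 0 then ((∑ a, γ a * Real.log (γ a / ρ a) : ℝ) : EReal)
  else (⊤ : EReal)

/-- `∫ R(q‖p) dν = Σ_a ν(a) · R(q(a,·)‖p(a,·))`. -/
def relEntInt {A : Type} [Fintype A] (ν : A → ℝ) (q p : A → A → ℝ) : EReal :=
  ∑ a, (ν a : EReal) * relEnt (q a) (p a)

/-- `ν` is an invariant measure of the kernel `q`. -/
def Invariant {A : Type} [Fintype A] (ν : A → ℝ) (q : A → A → ℝ) : Prop :=
  ∀ y, ∑ x, ν x * q x y = ν y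

/-- Extended-real logarithm: `⊥` at nonpositive arguments. -/
def elog (x : ℝ) : EReal := if x ≤ 0 then (⊥ : EReal) else ((Real.log x : ℝ) : EReal)

/-- Empirical measure of a finite trajectory `f : Fin (n+1) → A`. -/
def empMeas {A : Type} [Fintype A] [DecidableEq A] (n : ℕ) (f : Fin (n + 1) → A) :
    ProbMeas A :=
  ⟨fun a => ((Finset.univ.filter (fun i => f i = a)).card : ℝ) / (n + 1),
    fun a => by positivity, by
      have key : ∑ a : A, ((Finset.univ.filter (fun i => f i = a)).card) = n + 1 := by
        have h := Finset.card_eq_sum_card_fiberwise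
          (s := (Finset.univ : Finset (Fin (n + 1)))) (t := (Finset.univ : Finset A))
          (f := f) (fun i _ => Finset.mem_univ (f i))
        simpa using h.symm
      have key' : ∑ a : A, (((Finset.univ.filter (fun i => f i = a)).card : ℝ)) = (n : ℝ) + 1 := by
        have h2 := congrArg (fun m : ℕ => (m : ℝ)) key
        push_cast at h2
        simpa using h2
      rw [← Finset.sum_div, key', div_self (by positivity)]⟩

section Graph

variable {V : Type} [Fintype V] [DecidableEq V]

/-- Weight of an edge given the set `F` of already traversed edges. -/
def gw (δ : ℝ) (F : Finset (Sym2 V)) (e : Sym2 V) : ℝ := if e ∈ F then δ else 1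

/-- The transition kernel `p̂_F` on `V`. -/
def phat (G : SimpleGraph V) [DecidableRel G.Adj] (δ : ℝ) (F : Finset (Sym2 V))
    (x y : V) : ℝ :=
  if G.Adj x y then gw δ F s(x, y) / ∑ z ∈ G.neighborFinset x, gw δ F s(x, z) else 0

/-- Two edges are adjacent iff they share a vertex. -/
def edgeAdj (e e' : Sym2 V) : Prop := ∃ v, v ∈ e ∧ v ∈ e'

/-- `x` is a vertex of the edge set `F`. -/
def memVerts (F : Finset (Sym2 V)) (x : V) : Prop := ∃ e ∈ F, x ∈ e

/-- `𝒯_G`: stochastic matrices on `V` adapted to `G`. -/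
def TG (G : SimpleGraph V) : Set (V → V → ℝ) :=
  {q | (∀ x y, 0 ≤ q x y) ∧ (∀ x, ∑ y, q x y = 1) ∧ ∀ x y, q x y ≠ 0 → G.Adj x y}

/-- `𝒯(F)`: stochastic kernels from the vertex set of `F` to `V`, supported on `F`. -/
def TE (F : Finset (Sym2 V)) : Set (V → V → ℝ) :=
  {q | (∀ x y, 0 ≤ q x y) ∧ (∀ x, memVerts F x → ∑ y, q x y = 1) ∧
    ∀ x y, q x y ≠ 0 → s(x, y) ∈ F}

/-- `ℰ`: admissible increasing sequences of traversed edge sets. -/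
def seqE (G : SimpleGraph V) [DecidableRel G.Adj] (v₁ : V) :
    Set (Fin G.edgeFinset.card → Finset (Sym2 V)) :=
  {Es | (∀ k, Es k ⊆ G.edgeFinset) ∧ (∀ k, (Es k).card = (k : ℕ) + 1) ∧
    (∀ k l : Fin G.edgeFinset.card, (k : ℕ) + 1 = (l : ℕ) → Es k ⊂ Es l) ∧
    (∀ k : Fin G.edgeFinset.card, (k : ℕ) = 0 → ∃ e ∈ Es k, v₁ ∈ e) ∧
    (∀ k l : Fin G.edgeFinset.card, (k : ℕ) + 1 = (l : ℕ) →
      ∀ e ∈ Es l \ Es k, ∃ e' ∈ Es k, edgeAdj e e')}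

/-- The rate function `I_δ`. -/
def Ifun (G : SimpleGraph V) [DecidableRel G.Adj] (v₁ : V) (δ : ℝ) (ν : ProbMeas V) : EReal :=
  sInf { c : EReal |
    ∃ (νs : Fin G.edgeFinset.card → ProbMeas V) (r : Fin G.edgeFinset.card → ℝ)
      (Es : Fin G.edgeFinset.card → Finset (Sym2 V))
      (qs : Fin G.edgeFinset.card → V → V → ℝ),
      Es ∈ seqE G v₁ ∧ (∀ k, 0 ≤ r k) ∧ (∑ k, r k = 1) ∧
      (∀ k x, (νs k).1 x ≠ 0 → memVerts (Es k) x) ∧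
      (∀ x, ∑ k, r k * (νs k).1 x = ν.1 x) ∧
      (∀ k, qs k ∈ TE (Es k)) ∧ (∀ k, Invariant (νs k).1 (qs k)) ∧
      c = ∑ k, ((r k : ℝ) : EReal) * relEntInt (νs k).1 (qs k) (phat G δ (Es k)) }

/-- Edges traversed along a path, given as a list of consecutively visited vertices. -/
def pathEdges : List V → Finset (Sym2 V)
  | [] => ∅
  | [_] => ∅
  | x :: y :: t => insert s(x, y) (pathEdges (y :: t))

/-- Product of one-step ORRW transition probabilities along a trajectory,
the trajectory being listed in reverse chronological order. -/
def stepsProb (G : SimpleGraph V) [DecidableRel G.Adj] (δ : ℝ) : List V → ℝ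
  | [] => 1
  | [_] => 1
  | y :: x :: t => phat G δ (pathEdges (x :: t).reverse) x y * stepsProb G δ (x :: t)

/-- The law of `(X_0, …, X_n)` for the `δ`-ORRW started at `v₁`. -/
def trajProb (G : SimpleGraph V) [DecidableRel G.Adj] (δ : ℝ) (v₁ : V) (n : ℕ)
    (f : Fin (n + 1) → V) : ℝ :=
  if f 0 = v₁ then stepsProb G δ (List.ofFn f).reverse else 0

/-- `P_{v₁}(L_{n+1} ∈ C)`: the probability that the empirical measure of the first
`n+1` positions of the `δ`-ORRW lies in `C`. -/
def probEmp (G : SimpleGraph V) [DecidableRel G.Adj] (δ : ℝ) (v₁ : V) (n : ℕ)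
    (C : Set (ProbMeas V)) : ℝ :=
  ∑ f : Fin (n + 1) → V, if empMeas n f ∈ C then trajProb G δ v₁ n f else 0

/-- The family `𝒮` of edge sets of connected subgraphs having an edge at `v₁`. -/
def scrS (G : SimpleGraph V) [DecidableRel G.Adj] (v₁ : V) : Set (Finset (Sym2 V)) :=
  {F | F ⊆ G.edgeFinset ∧ (∃ e ∈ F, v₁ ∈ e) ∧
    ∀ x y : V, memVerts F x → memVerts F y →
      (SimpleGraph.fromEdgeSet (↑F : Set (Sym2 V))).Reachable x y}

/-- `𝒮₀` is a decreasing subset of `𝒮`. -/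
def DecreasingIn (G : SimpleGraph V) [DecidableRel G.Adj] (v₁ : V)
    (S0 : Set (Finset (Sym2 V))) : Prop :=
  ∀ F₁ F₂, F₁ ∈ scrS G v₁ → F₂ ∈ scrS G v₁ → F₁ ⊆ F₂ → F₂ ∈ S0 → F₁ ∈ S0

/-- `P_{v₁}(T_{𝒮₀} > n)`. -/
def probTgt (G : SimpleGraph V) [DecidableRel G.Adj] (δ : ℝ) (v₁ : V)
    (S0 : Set (Finset (Sym2 V))) (n : ℕ) : ℝ :=
  ∑ f : Fin (n + 1) → V,
    if ∀ k, 1 ≤ k → k ≤ n → pathEdges ((List.ofFn f).take (k + 1)) ∈ S0 then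
      trajProb G δ v₁ n f
    else 0

/-- `P_{v₁}(C_E > n)` for the edge cover time `C_E`. -/
def probCgt (G : SimpleGraph V) [DecidableRel G.Adj] (δ : ℝ) (v₁ : V) (n : ℕ) : ℝ :=
  ∑ f : Fin (n + 1) → V,
    if ¬ G.edgeFinset ⊆ pathEdges (List.ofFn f) then trajProb G δ v₁ n f else 0

/-- `E_{v₁}[exp (α T_{𝒮₀})]`, valued in `ℝ≥0∞`; the stopping time takes values in
`{1, 2, …} ∪ {∞}`. -/
def expT (G : SimpleGraph V) [DecidableRel G.Adj] (δ : ℝ) (v₁ : V)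
    (S0 : Set (Finset (Sym2 V))) (α : ℝ) : ℝ≥0∞ :=
  (∑' n : ℕ, ENNReal.ofReal
      (Real.exp (α * (n + 1)) * (probTgt G δ v₁ S0 n - probTgt G δ v₁ S0 (n + 1)))) +
    (if 0 < α then (⊤ : ℝ≥0∞) else if α = 0 then 1 else 0) *
      ENNReal.ofReal (⨅ n : ℕ, probTgt G δ v₁ S0 n)

/-- `E_{v₁}[exp (α C_E)]`, valued in `ℝ≥0∞`. -/
def expC (G : SimpleGraph V) [DecidableRel G.Adj] (δ : ℝ) (v₁ : V) (α : ℝ) : ℝ≥0∞ :=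
  (∑' n : ℕ, ENNReal.ofReal
      (Real.exp (α * (n + 1)) * (probCgt G δ v₁ n - probCgt G δ v₁ (n + 1)))) +
    (if 0 < α then (⊤ : ℝ≥0∞) else if α = 0 then 1 else 0) *
      ENNReal.ofReal (⨅ n : ℕ, probCgt G δ v₁ n)

/-- The critical exponent `α_c(δ)` attached to a family `𝒮₀` of edge sets. -/
def alphaC (G : SimpleGraph V) [DecidableRel G.Adj] (δ : ℝ)
    (S0 : Set (Finset (Sym2 V))) : EReal :=
  sInf { c : EReal | ∃ (ν : ProbMeas V) (F : Finset (Sym2 V)) (q : V → V → ℝ),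
    F ∈ S0 ∧ q ∈ TE F ∧ (∀ x, ν.1 x ≠ 0 → memVerts F x) ∧ Invariant ν.1 q ∧
    c = relEntInt ν.1 q (phat G δ F) }

/-- `α_c^1(δ)`: the critical exponent for the cover time. -/
def alphaC1 (G : SimpleGraph V) [DecidableRel G.Adj] (v₁ : V) (δ : ℝ) : EReal :=
  alphaC G δ (scrS G v₁ \ {G.edgeFinset})

end Graph

section Lifted

variable {V : Type} [Fintype V] [LinearOrder V]

/-- Smaller endpoint of an unordered pair. -/
def sym2lo (e : Sym2 V) : V := Sym2.lift ⟨fun a b => min a b, fun a b => min_comm a b⟩ e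

/-- Larger endpoint of an unordered pair. -/
def sym2hi (e : Sym2 V) : V := Sym2.lift ⟨fun a b => max a b, fun a b => max_comm a b⟩ e

/-- `V_S = E × {-1, 1}`: vertex set of the lifted directed graph `S`
(`true` plays the role of `+1`). -/
abbrev VSet (G : SimpleGraph V) [DecidableRel G.Adj] : Type :=
  {e : Sym2 V // e ∈ G.edgeFinset} × Bool

/-- Tail `z⁻` of an oriented edge. -/
def zm (G : SimpleGraph V) [DecidableRel G.Adj] (z : VSet G) : V :=
  if z.2 then sym2lo z.1.1 else sym2hi z.1.1

/-- Head `z⁺` of an oriented edge. -/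
def zp (G : SimpleGraph V) [DecidableRel G.Adj] (z : VSet G) : V :=
  if z.2 then sym2hi z.1.1 else sym2lo z.1.1

/-- The kernel `p_F` on the lifted directed graph `S`. -/
def pS (G : SimpleGraph V) [DecidableRel G.Adj] (δ : ℝ) (F : Finset (Sym2 V))
    (z₁ z₂ : VSet G) : ℝ :=
  if zp G z₁ = zm G z₂ then
    gw δ F z₂.1.1 / ∑ w : VSet G, (if zp G z₁ = zm G w then gw δ F w.1.1 else 0)
  else 0

/-- `𝒯_S`: stochastic matrices on `V_S` moving along orientations. -/
def TS (G : SimpleGraph V) [DecidableRel G.Adj] : Set (VSet G → VSet G → ℝ) :=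
  {q | (∀ z w, 0 ≤ q z w) ∧ (∀ z, ∑ w, q z w = 1) ∧ ∀ z w, q z w ≠ 0 → zp G z = zm G w}

/-- `𝒞(𝒮₀)`: probability measures on `V_S` whose first marginal is supported in
some member of `𝒮₀`. -/
def CC (G : SimpleGraph V) [DecidableRel G.Adj] (S0 : Set (Finset (Sym2 V))) :
    Set (ProbMeas (VSet G)) :=
  {μ | ∃ F ∈ S0, ∀ z : VSet G, μ.1 z ≠ 0 → z.1.1 ∈ F}

/-- `Λ_{δ,𝒮₀}`. -/
def Lam (G : SimpleGraph V) [DecidableRel G.Adj] (v₁ : V) (δ : ℝ)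
    (S0 : Set (Finset (Sym2 V))) (μ : ProbMeas (VSet G)) : EReal :=
  sInf { c : EReal |
    ∃ (μs : Fin G.edgeFinset.card → ProbMeas (VSet G)) (r : Fin G.edgeFinset.card → ℝ)
      (Es : Fin G.edgeFinset.card → Finset (Sym2 V))
      (qs : Fin G.edgeFinset.card → VSet G → VSet G → ℝ),
      Es ∈ seqE G v₁ ∧ (∀ k, 0 ≤ r k) ∧ (∀ k, Es k ∉ S0 → r k = 0) ∧ (∑ k, r k = 1) ∧
      (∀ k z, (μs k).1 z ≠ 0 → z.1.1 ∈ Es k) ∧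
      (∀ z, ∑ k, r k * (μs k).1 z = μ.1 z) ∧
      (∀ k, qs k ∈ TS G) ∧ (∀ k, Invariant (μs k).1 (qs k)) ∧
      c = ∑ k, ((r k : ℝ) : EReal) * relEntInt (μs k).1 (qs k) (pS G δ (Es k)) }

/-- `Λ^z_{δ,𝒮₀}`. -/
def LamZ (G : SimpleGraph V) [DecidableRel G.Adj] (v₁ : V) (δ : ℝ)
    (S0 : Set (Finset (Sym2 V))) (z : VSet G) (μ : ProbMeas (VSet G)) : EReal :=
  sInf { c : EReal |
    ∃ (μs : Fin G.edgeFinset.card → ProbMeas (VSet G)) (r : Fin G.edgeFinset.card → ℝ)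
      (Es : Fin G.edgeFinset.card → Finset (Sym2 V))
      (qs : Fin G.edgeFinset.card → VSet G → VSet G → ℝ),
      Es ∈ seqE G v₁ ∧ (∀ k : Fin G.edgeFinset.card, (k : ℕ) = 0 → Es k = {z.1.1}) ∧
      (∀ k, 0 ≤ r k) ∧ (∀ k, Es k ∉ S0 → r k = 0) ∧ (∑ k, r k = 1) ∧
      (∀ k w, (μs k).1 w ≠ 0 → w.1.1 ∈ Es k) ∧
      (∀ w, ∑ k, r k * (μs k).1 w = μ.1 w) ∧
      (∀ k, qs k ∈ TS G) ∧ (∀ k, Invariant (μs k).1 (qs k)) ∧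
      c = ∑ k, ((r k : ℝ) : EReal) * relEntInt (μs k).1 (qs k) (pS G δ (Es k)) }

/-- `Λ₁`: the Donsker–Varadhan functional for the simple random walk on `S`
(whose kernel is `pS` with `δ = 1`). -/
def Lam1 (G : SimpleGraph V) [DecidableRel G.Adj] (μ : ProbMeas (VSet G)) : EReal :=
  sInf { c : EReal | ∃ q ∈ TS G, Invariant μ.1 q ∧ c = relEntInt μ.1 q (pS G 1 ∅) }

/-- Boundary `∂F` of an edge set: edges of `F` adjacent to some edge outside `F`. -/
def bdry (G : SimpleGraph V) [DecidableRel G.Adj] (F : Finset (Sym2 V)) : Finset (Sym2 V) :=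
  F.filter fun e => ∃ e' ∈ G.edgeFinset \ F, edgeAdj e e'

/-- Out-degree `d(z)` of `z` in `S`. -/
def outDeg (G : SimpleGraph V) [DecidableRel G.Adj] (z : VSet G) : ℕ :=
  (Finset.univ.filter (fun w : VSet G => zp G z = zm G w)).card

/-- Number `k(z)` of out-neighbours of `z` lying in `F × {-1, 1}`. -/
def outDegIn (G : SimpleGraph V) [DecidableRel G.Adj] (F : Finset (Sym2 V))
    (z : VSet G) : ℕ :=
  (Finset.univ.filter (fun w : VSet G => zp G z = zm G w ∧ w.1.1 ∈ F)).card

/-- The law of `(Z_0, …, Z_n)` for the lifted `δ`-ORRW conditioned on `Z_0 = z`. -/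
def liftTraj (G : SimpleGraph V) [DecidableRel G.Adj] (δ : ℝ) (z : VSet G) (n : ℕ)
    (g : Fin (n + 1) → VSet G) : ℝ :=
  if g 0 = z then
    ∏ i : Fin n,
      pS G δ ((Finset.Iic i.castSucc).image (fun j => (g j).1.1))
        (g i.castSucc) (g i.succ)
  else 0

/-- The restricted logarithmic Laplace functional `W^{n+1}_{𝒮₀}(z)`. -/
def Wres (G : SimpleGraph V) [DecidableRel G.Adj] (δ : ℝ) (z : VSet G)
    (S0 : Set (Finset (Sym2 V))) (h : ProbMeas (VSet G) → ℝ) (n : ℕ) : EReal :=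
  if 0 < ∑ g : Fin (n + 1) → VSet G,
      (if empMeas n g ∈ CC G S0 then liftTraj G δ z n g else 0) then
    ((-((((n : ℝ) + 1))⁻¹ * Real.log (∑ g : Fin (n + 1) → VSet G,
      if empMeas n g ∈ CC G S0 then
        Real.exp (-((n : ℝ) + 1) * h (empMeas n g)) * liftTraj G δ z n g
      else 0)) : ℝ) : EReal)
  else (⊤ : EReal)

end Lifted

/-!
On the full edge set all weights are equal to `δ`, so there the reinforced kernel is the simple
random walk, whatever `δ` is. The rate function is insensitive to `δ ≤ 1` because this last stage
is the only one that matters.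

*Upper bound.* Given any decomposition `ν = ∑ r_k ν_k` with kernels `q_k`, the kernel
`q(x, ·) = ∑ (r_k ν_k(x) / ν(x)) q_k(x, ·)` leaves `ν` invariant, and by convexity of the relative
entropy its cost with respect to the simple random walk is at most that of the decomposition.
Spending the whole time in the last stage with kernel `q` therefore gives `I_δ ≤ I₁`.

*Lower bound.* Along an edge `{x, y}` of `E'`, the probability `p̂_{E'}(x, y)` increases with `δ`.
Since `q_k` only charges edges of `E_k`, every decomposition costs less as `δ` grows, so
`I₁ ≤ I_δ`.
-/

section EReal

theorem ereal_coe_sum {ι : Type*} (s : Finset ι) (f : ι → ℝ) :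
    ((∑ i ∈ s, f i : ℝ) : EReal) = ∑ i ∈ s, (f i : EReal) :=
  map_sum (⟨⟨Real.toEReal, EReal.coe_zero⟩, EReal.coe_add⟩ : ℝ →+ EReal) f s

theorem ereal_coe_mul_sum {ι : Type*} {c : ℝ} (hc : 0 ≤ c) (s : Finset ι) (f : ι → EReal) :
    (c : EReal) * ∑ i ∈ s, f i = ∑ i ∈ s, (c : EReal) * f i := by
  induction s using Finset.cons_induction with
  | empty => simp
  | cons a s ha ih =>
    rw [Finset.sum_cons, Finset.sum_cons, ← ih]
    exact EReal.left_distrib_of_nonneg_of_ne_top (EReal.coe_nonneg.2 hc) (EReal.coe_ne_top c) _ _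

end EReal

section RelativeEntropy

variable {A : Type} [Fintype A]

theorem relEnt_of_absCont {γ ρ : A → ℝ} (hγρ : ∀ a, ρ a = 0 → γ a = 0) :
    relEnt γ ρ = ((∑ a, γ a * Real.log (γ a / ρ a) : ℝ) : EReal) :=
  if_pos hγρ

theorem relEnt_anti_right {γ ρ ρ' : A → ℝ} (hγ : ∀ a, 0 ≤ γ a)
    (hρ : ∀ a, 0 ≤ ρ a) (hρρ' : ∀ a, γ a ≠ 0 → ρ a ≤ ρ' a) :
    relEnt γ ρ' ≤ relEnt γ ρ := by
  by_cases hγρ : ∀ a, ρ a = 0 → γ a = 0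
  · have hρ_pos : ∀ a, γ a ≠ 0 → 0 < ρ a := fun a ha =>
      (hρ a).lt_of_ne' fun h => ha (hγρ a h)
    have hγρ' : ∀ a, ρ' a = 0 → γ a = 0 := fun a h => by
      by_contra ha
      exact ((hρ_pos a ha).trans_le (hρρ' a ha)).ne' h
    rw [relEnt_of_absCont hγρ, relEnt_of_absCont hγρ', EReal.coe_le_coe_iff]
    refine Finset.sum_le_sum fun a _ => ?_
    rcases (hγ a).eq_or_lt with ha | ha
    · simp [← ha]
    · have hρa := hρ_pos a ha.ne'
      have hle := hρρ' a ha.ne'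
      have hρ'a := hρa.trans_le hle
      gcongr
  · exact le_top.trans_eq (if_neg hγρ).symm

theorem relEntInt_anti_right {ν : A → ℝ} {q p p' : A → A → ℝ} (hν : ∀ x, 0 ≤ ν x)
    (hq : ∀ x y, 0 ≤ q x y) (hp : ∀ x y, 0 ≤ p x y)
    (hpp' : ∀ x y, q x y ≠ 0 → p x y ≤ p' x y) :
    relEntInt ν q p' ≤ relEntInt ν q p :=
  Finset.sum_le_sum fun x _ => mul_le_mul_of_nonneg_left
    (relEnt_anti_right (hq x) (hp x) (hpp' x)) (EReal.coe_nonneg.2 (hν x))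

theorem coe_mul_relEntInt {c : ℝ} (hc : 0 ≤ c) (ν : A → ℝ) (q p : A → A → ℝ) :
    (c : EReal) * relEntInt ν q p = relEntInt (fun x => c * ν x) q p := by
  simp only [relEntInt, ereal_coe_mul_sum hc, EReal.coe_mul, mul_assoc]

theorem convexOn_mul_log_div (p : ℝ) :
    ConvexOn ℝ (Set.Ici 0) fun t : ℝ => t * Real.log (t / p) := by
  rcases eq_or_ne p 0 with rfl | hp
  · simpa using convexOn_const (0 : ℝ) (convex_Ici (0 : ℝ))
  · have hlinear : ConcaveOn ℝ (Set.Ici 0) fun t : ℝ => t * Real.log p :=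
      (LinearMap.mulRight ℝ (Real.log p)).concaveOn (convex_Ici 0)
    refine (Real.convexOn_mul_log.sub hlinear).congr fun t _ => ?_
    rcases eq_or_ne t 0 with rfl | ht
    · simp
    · simp only [Pi.sub_apply, Real.log_div ht hp, mul_sub]

theorem sum_mul_relEnt_centerMass_le {ι : Type*} [Fintype ι] {w : ι → ℝ} {γ : ι → A → ℝ}
    {ρ : A → ℝ} (hw : ∀ i, 0 ≤ w i) (hw_pos : 0 < ∑ i, w i) (hγ : ∀ i a, 0 ≤ γ i a)
    (hγρ : ∀ i a, ρ a = 0 → γ i a = 0) :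
    ((∑ i, w i : ℝ) : EReal) * relEnt (Finset.univ.centerMass w γ) ρ ≤
      ∑ i, (w i : EReal) * relEnt (γ i) ρ := by
  set m := Finset.univ.centerMass w γ with hm
  have hm_apply : ∀ a, m a = Finset.univ.centerMass w (γ · a) := fun a => by
    simp only [hm, Finset.centerMass, Pi.smul_apply, Finset.sum_apply]
  have hmρ : ∀ a, ρ a = 0 → m a = 0 := fun a ha => by
    simp [hm_apply, Finset.centerMass, hγρ _ a ha]
  have hjensen : ∀ a, (∑ i, w i) * (m a * Real.log (m a / ρ a)) ≤
      ∑ i, w i * (γ i a * Real.log (γ i a / ρ a)) := fun a => by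
    have h := (convexOn_mul_log_div (ρ a)).map_centerMass_le (fun i _ => hw i) hw_pos
      fun i _ => hγ i a
    rw [hm_apply a]
    refine (mul_le_mul_of_nonneg_left h hw_pos.le).trans_eq ?_
    simp only [Finset.centerMass, smul_eq_mul, Function.comp_apply,
      mul_inv_cancel_left₀ hw_pos.ne']
  simp only [relEnt_of_absCont hmρ, relEnt_of_absCont (hγρ _), ← EReal.coe_mul,
    ← ereal_coe_sum, EReal.coe_le_coe_iff]
  calc (∑ i, w i) * ∑ a, m a * Real.log (m a / ρ a)
      = ∑ a, (∑ i, w i) * (m a * Real.log (m a / ρ a)) := Finset.mul_sum ..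
    _ ≤ ∑ a, ∑ i, w i * (γ i a * Real.log (γ i a / ρ a)) :=
        Finset.sum_le_sum fun a _ => hjensen a
    _ = ∑ i, w i * ∑ a, γ i a * Real.log (γ i a / ρ a) := by
        simp only [Finset.mul_sum]
        exact Finset.sum_comm

end RelativeEntropy

section MixKernel

variable {ι : Type*} [Fintype ι] {A : Type}

/-- The mixture of the kernels `q i`, each of them weighted at `x` by the mass `μ i x`. Running
`q i` from `μ i` for every `i` produces the same flow as running the mixture from `∑ i, μ i`.
Rows of zero total mass are taken from the default kernel `p`. -/
def mixKernel (p : A → A → ℝ) (μ : ι → A → ℝ) (q : ι → A → A → ℝ) (x : A) : A → ℝ :=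
  if ∑ i, μ i x = 0 then p x else Finset.univ.centerMass (μ · x) (q · x)

variable {p : A → A → ℝ} {μ : ι → A → ℝ} {q : ι → A → A → ℝ}

theorem mixKernel_apply_of_ne_zero {x : A} (hx : ∑ i, μ i x ≠ 0) (y : A) :
    mixKernel p μ q x y = (∑ i, μ i x)⁻¹ * ∑ i, μ i x * q i x y := by
  simp only [mixKernel, if_neg hx, Finset.centerMass, Pi.smul_apply, Finset.sum_apply, smul_eq_mul]

theorem sum_mul_mixKernel (hμ : ∀ i x, 0 ≤ μ i x) (x y : A) :
    (∑ i, μ i x) * mixKernel p μ q x y = ∑ i, μ i x * q i x y := by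
  by_cases hx : ∑ i, μ i x = 0
  · have hμx := (Finset.sum_eq_zero_iff_of_nonneg fun i _ => hμ i x).1 hx
    rw [hx, zero_mul, Finset.sum_eq_zero fun i hi => by rw [hμx i hi, zero_mul]]
  · rw [mixKernel_apply_of_ne_zero hx, mul_inv_cancel_left₀ hx]

variable [Fintype A]

theorem invariant_mixKernel (hμ : ∀ i x, 0 ≤ μ i x) (hq : ∀ i, Invariant (μ i) (q i)) :
    Invariant (fun x => ∑ i, μ i x) (mixKernel p μ q) := fun y => by
  simp only [sum_mul_mixKernel hμ]
  rw [Finset.sum_comm]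
  exact Finset.sum_congr rfl fun i _ => hq i y

theorem relEntInt_mixKernel_le {ρ : A → A → ℝ} (hμ : ∀ i x, 0 ≤ μ i x)
    (hq : ∀ i x y, 0 ≤ q i x y) (hqρ : ∀ i x y, ρ x y = 0 → q i x y = 0) :
    relEntInt (fun x => ∑ i, μ i x) (mixKernel p μ q) ρ ≤ ∑ i, relEntInt (μ i) (q i) ρ := by
  simp only [relEntInt]
  rw [Finset.sum_comm]
  refine Finset.sum_le_sum fun x _ => ?_
  rcases (Finset.sum_nonneg (s := Finset.univ) fun i _ => hμ i x).eq_or_lt with hx | hx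
  · have hμx := (Finset.sum_eq_zero_iff_of_nonneg fun i _ => hμ i x).1 hx.symm
    simp [hμx]
  · rw [mixKernel, if_neg hx.ne']
    exact sum_mul_relEnt_centerMass_le (hμ · x) hx (hq · x) (hqρ · x)

theorem mixKernel_mem_TE {F : Finset (Sym2 A)} {Es : ι → Finset (Sym2 A)} (hp : p ∈ TE F)
    (hq : ∀ i, q i ∈ TE (Es i)) (hEs : ∀ i, Es i ⊆ F) (hμ : ∀ i x, 0 ≤ μ i x)
    (hμ_supp : ∀ i x, μ i x ≠ 0 → memVerts (Es i) x) :
    mixKernel p μ q ∈ TE F := by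
  have hrow : ∀ x, ∑ i, μ i x = 0 → mixKernel p μ q x = p x := fun x hx => if_pos hx
  refine ⟨fun x y => ?_, fun x hxF => ?_, fun x y hxy => ?_⟩ <;>
    by_cases hx : ∑ i, μ i x = 0
  · rw [hrow x hx]
    exact hp.1 x y
  · rw [mixKernel_apply_of_ne_zero hx]
    exact mul_nonneg (inv_nonneg.2 (Finset.sum_nonneg fun i _ => hμ i x))
      (Finset.sum_nonneg fun i _ => mul_nonneg (hμ i x) ((hq i).1 x y))
  · rw [hrow x hx]
    exact hp.2.1 x hxF
  · have hmass : ∀ i, ∑ y, μ i x * q i x y = μ i x := fun i => by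
      by_cases hi : μ i x = 0
      · simp [hi]
      · rw [← Finset.mul_sum, (hq i).2.1 x (hμ_supp i x hi), mul_one]
    simp only [mixKernel_apply_of_ne_zero hx]
    rw [← Finset.mul_sum, Finset.sum_comm]
    simp only [hmass, inv_mul_cancel₀ hx]
  · rw [hrow x hx] at hxy
    exact hp.2.2 x y hxy
  · rw [mixKernel_apply_of_ne_zero hx] at hxy
    obtain ⟨i, -, hi⟩ := Finset.exists_ne_zero_of_sum_ne_zero (right_ne_zero_of_mul hxy)
    exact hEs i ((hq i).2.2 x y (right_ne_zero_of_mul hi))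

end MixKernel

section ReinforcedKernel

variable {V : Type} [DecidableEq V] {δ δ' : ℝ}

theorem gw_pos (hδ : 0 < δ) (F : Finset (Sym2 V)) (e : Sym2 V) : 0 < gw δ F e := by
  unfold gw
  split_ifs
  exacts [hδ, one_pos]

variable [Fintype V] (G : SimpleGraph V) [DecidableRel G.Adj]

variable {G} in
theorem sum_gw_pos (hδ : 0 < δ) (F : Finset (Sym2 V)) {x y : V} (hxy : G.Adj x y) :
    0 < ∑ z ∈ G.neighborFinset x, gw δ F s(x, z) :=
  Finset.sum_pos (fun _ _ => gw_pos hδ F _) ⟨y, (G.mem_neighborFinset x y).2 hxy⟩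

variable {G} in
theorem phat_pos (hδ : 0 < δ) (F : Finset (Sym2 V)) {x y : V} (hxy : G.Adj x y) :
    0 < phat G δ F x y := by
  rw [phat, if_pos hxy]
  exact div_pos (gw_pos hδ F _) (sum_gw_pos hδ F hxy)

theorem phat_nonneg (hδ : 0 < δ) (F : Finset (Sym2 V)) (x y : V) : 0 ≤ phat G δ F x y := by
  by_cases hxy : G.Adj x y
  · exact (phat_pos hδ F hxy).le
  · exact (if_neg hxy).ge

variable {G} in
theorem sum_phat (hδ : 0 < δ) (F : Finset (Sym2 V)) {x y : V} (hxy : G.Adj x y) :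
    ∑ z, phat G δ F x z = 1 := by
  simp only [phat, ← G.mem_neighborFinset, Finset.sum_ite_mem, Finset.univ_inter]
  rw [← Finset.sum_div, div_self (sum_gw_pos hδ F hxy).ne']

theorem phat_mem_TE (hδ : 0 < δ) (F : Finset (Sym2 V)) : phat G δ F ∈ TE G.edgeFinset := by
  refine ⟨phat_nonneg G hδ F, ?_, fun x y hxy => ?_⟩
  · rintro x ⟨e, he, y, rfl⟩
    exact sum_phat hδ F (by simpa using he)
  · by_contra hmem
    exact hxy (if_neg (by simpa using hmem))

variable {G} in
theorem eq_zero_of_phat_eq_zero (hδ : 0 < δ) {F F' : Finset (Sym2 V)} (hF : F ⊆ G.edgeFinset)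
    {q : V → V → ℝ} (hq : q ∈ TE F) {x y : V} (hxy : phat G δ F' x y = 0) : q x y = 0 := by
  by_contra hne
  have hadj : G.Adj x y := by simpa using hF (hq.2.2 x y hne)
  exact (phat_pos hδ F' hadj).ne' hxy

theorem phat_le_phat_of_mem (hδ : 0 < δ) (hδδ' : δ ≤ δ') {F : Finset (Sym2 V)} {x y : V}
    (hxy : s(x, y) ∈ F) : phat G δ F x y ≤ phat G δ' F x y := by
  unfold phat
  split_ifs with hadj
  · rw [div_le_div_iff₀ (sum_gw_pos hδ F hadj) (sum_gw_pos (hδ.trans_le hδδ') F hadj)]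
    simp only [gw, if_pos hxy, Finset.mul_sum]
    refine Finset.sum_le_sum fun z _ => ?_
    split_ifs <;> linarith
  · rfl

theorem phat_one (F : Finset (Sym2 V)) (x y : V) :
    phat G 1 F x y = if G.Adj x y then (G.degree x : ℝ)⁻¹ else 0 := by
  simp [phat, gw]

theorem phat_edgeFinset (hδ : δ ≠ 0) (x y : V) :
    phat G δ G.edgeFinset x y = if G.Adj x y then (G.degree x : ℝ)⁻¹ else 0 := by
  have hweight : ∀ z ∈ G.neighborFinset x, gw δ G.edgeFinset s(x, z) = δ := fun z hz =>
    if_pos (by simpa using hz)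
  unfold phat
  split_ifs with hxy
  · rw [Finset.sum_congr rfl hweight, hweight y ((G.mem_neighborFinset x y).2 hxy),
      Finset.sum_const, nsmul_eq_mul, div_mul_cancel_right₀ hδ, G.card_neighborFinset_eq_degree]
  · rfl

end ReinforcedKernel

section Decomposition

variable {V : Type} [Fintype V] [DecidableEq V]

/-- An element `(ν_k, r_k, E_k, q̂_k)_k` of `Â(ν)`, the set over which the infimum in `Ifun` is
taken, with components `meas`, `weight`, `edges` and `kernel`. The index `k` of the
paper, running from `1` to `b`, is shifted to `0, …, b - 1`. -/
structure Decomposition (G : SimpleGraph V) [DecidableRel G.Adj] (v₁ : V) (ν : ProbMeas V) where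
  meas : Fin G.edgeFinset.card → ProbMeas V
  weight : Fin G.edgeFinset.card → ℝ
  edges : Fin G.edgeFinset.card → Finset (Sym2 V)
  kernel : Fin G.edgeFinset.card → V → V → ℝ
  edges_mem : edges ∈ seqE G v₁
  weight_nonneg : ∀ k, 0 ≤ weight k
  sum_weight : ∑ k, weight k = 1
  memVerts_of_meas_ne_zero : ∀ k x, (meas k).1 x ≠ 0 → memVerts (edges k) x
  sum_weight_mul_meas : ∀ x, ∑ k, weight k * (meas k).1 x = ν.1 x
  kernel_mem : ∀ k, kernel k ∈ TE (edges k)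
  invariant : ∀ k, Invariant (meas k).1 (kernel k)

namespace Decomposition

variable {G : SimpleGraph V} [DecidableRel G.Adj] {v₁ : V} {ν : ProbMeas V} {δ δ' : ℝ}

/-- The functional `∑ k, r_k ∫ R(q̂_k ‖ p̂_{E_k}) dν_k` minimized by `Ifun`. -/
def cost (D : Decomposition G v₁ ν) (δ : ℝ) : EReal :=
  ∑ k, (D.weight k : EReal) * relEntInt (D.meas k).1 (D.kernel k) (phat G δ (D.edges k))

theorem edges_subset (D : Decomposition G v₁ ν) (k : Fin G.edgeFinset.card) :
    D.edges k ⊆ G.edgeFinset :=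
  D.edges_mem.1 k

theorem cost_anti (D : Decomposition G v₁ ν) (hδ : 0 < δ) (hδδ' : δ ≤ δ') :
    D.cost δ' ≤ D.cost δ :=
  Finset.sum_le_sum fun k _ => mul_le_mul_of_nonneg_left
    (relEntInt_anti_right (D.meas k).2.1 (D.kernel_mem k).1 (phat_nonneg G hδ _)
      fun x y hxy => phat_le_phat_of_mem G hδ hδδ' ((D.kernel_mem k).2.2 x y hxy))
    (EReal.coe_nonneg.2 (D.weight_nonneg k))

theorem exists_edges_eq_edgeFinset (D : Decomposition G v₁ ν) :
    ∃ k, D.edges k = G.edgeFinset := by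
  obtain ⟨k, -, -⟩ := Finset.exists_ne_zero_of_sum_ne_zero (D.sum_weight.trans_ne one_ne_zero)
  have hcard : G.edgeFinset.card - 1 < G.edgeFinset.card := Nat.pred_lt_of_lt k.isLt
  refine ⟨⟨_, hcard⟩, Finset.eq_of_subset_of_card_le (D.edges_subset _) ?_⟩
  rw [D.edges_mem.2.1 ⟨_, hcard⟩]
  exact Nat.le_add_of_sub_le le_rfl

theorem memVerts_edgeFinset_of_ne_zero (D : Decomposition G v₁ ν) {x : V} (hx : ν.1 x ≠ 0) :
    memVerts G.edgeFinset x := by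
  rw [← D.sum_weight_mul_meas] at hx
  obtain ⟨k, -, hk⟩ := Finset.exists_ne_zero_of_sum_ne_zero hx
  obtain ⟨e, he, hxe⟩ := D.memVerts_of_meas_ne_zero k x (right_ne_zero_of_mul hk)
  exact ⟨e, D.edges_subset k he, hxe⟩

/-- Moves all the weight of `D` to the index `k`, replacing `ν_k` and `q̂_k` by `ν` and `q`. -/
def concentrate (D : Decomposition G v₁ ν) (k : Fin G.edgeFinset.card) (q : V → V → ℝ)
    (hν : ∀ x, ν.1 x ≠ 0 → memVerts (D.edges k) x) (hq : q ∈ TE (D.edges k))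
    (hinv : Invariant ν.1 q) : Decomposition G v₁ ν where
  meas := Function.update D.meas k ν
  weight := Pi.single k 1
  edges := D.edges
  kernel := Function.update D.kernel k q
  edges_mem := D.edges_mem
  weight_nonneg := (Pi.single_nonneg.2 zero_le_one : (0 : Fin _ → ℝ) ≤ Pi.single k 1)
  sum_weight := by simp
  memVerts_of_meas_ne_zero l x hx := by
    rcases eq_or_ne l k with rfl | hl
    · exact hν x (by simpa using hx)
    · exact D.memVerts_of_meas_ne_zero l x (by simpa [hl] using hx)
  sum_weight_mul_meas x := by simp [Pi.single_apply]
  kernel_mem l := by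
    rcases eq_or_ne l k with rfl | hl
    · simpa using hq
    · simpa [hl] using D.kernel_mem l
  invariant l := by
    rcases eq_or_ne l k with rfl | hl
    · simpa using hinv
    · simpa [hl] using D.invariant l

theorem cost_concentrate (D : Decomposition G v₁ ν) (k : Fin G.edgeFinset.card) (q : V → V → ℝ)
    (hν : ∀ x, ν.1 x ≠ 0 → memVerts (D.edges k) x) (hq : q ∈ TE (D.edges k))
    (hinv : Invariant ν.1 q) (δ : ℝ) :
    (D.concentrate k q hν hq hinv).cost δ = relEntInt ν.1 q (phat G δ (D.edges k)) := by
  rw [cost, Finset.sum_eq_single k]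
  · simp [concentrate]
  · intro l _ hl
    simp [concentrate, hl]
  · simp

/-- The unnormalized measures `r_k ν_k`, whose sum is `ν`. -/
def mass (D : Decomposition G v₁ ν) (k : Fin G.edgeFinset.card) (x : V) : ℝ :=
  D.weight k * (D.meas k).1 x

theorem mass_nonneg (D : Decomposition G v₁ ν) (k : Fin G.edgeFinset.card) (x : V) :
    0 ≤ D.mass k x :=
  mul_nonneg (D.weight_nonneg k) ((D.meas k).2.1 x)

theorem sum_mass (D : Decomposition G v₁ ν) : (fun x => ∑ k, D.mass k x) = ν.1 :=
  funext D.sum_weight_mul_meas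

/-- A single kernel on the full edge set with invariant measure `ν`, obtained by mixing the
kernels of `D`. -/
def mixture (D : Decomposition G v₁ ν) : V → V → ℝ :=
  mixKernel (phat G 1 G.edgeFinset) D.mass D.kernel

theorem mixture_mem_TE (D : Decomposition G v₁ ν) : D.mixture ∈ TE G.edgeFinset :=
  mixKernel_mem_TE (phat_mem_TE G one_pos _) D.kernel_mem D.edges_subset D.mass_nonneg
    fun k x hx => D.memVerts_of_meas_ne_zero k x (right_ne_zero_of_mul hx)

theorem invariant_mixture (D : Decomposition G v₁ ν) : Invariant ν.1 D.mixture := by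
  have hmass : ∀ k, Invariant (D.mass k) (D.kernel k) := fun k y => by
    simp only [mass, mul_assoc, ← Finset.mul_sum, D.invariant k y]
  rw [← D.sum_mass]
  exact invariant_mixKernel D.mass_nonneg hmass

theorem relEntInt_mixture_le (D : Decomposition G v₁ ν) :
    relEntInt ν.1 D.mixture (phat G 1 G.edgeFinset) ≤ D.cost 1 := by
  have hphat : ∀ k, phat G 1 (D.edges k) = phat G 1 G.edgeFinset := fun k => by
    funext x y
    rw [phat_one, phat_one]
  have hcost : D.cost 1 = ∑ k, relEntInt (D.mass k) (D.kernel k) (phat G 1 G.edgeFinset) :=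
    Finset.sum_congr rfl fun k _ => by
      rw [coe_mul_relEntInt (D.weight_nonneg k), hphat]
      rfl
  rw [hcost, ← D.sum_mass]
  exact relEntInt_mixKernel_le D.mass_nonneg (fun k => (D.kernel_mem k).1)
    fun k x y => eq_zero_of_phat_eq_zero one_pos (D.edges_subset k) (D.kernel_mem k)

theorem exists_cost_le_cost_one (D : Decomposition G v₁ ν) (hδ : δ ≠ 0) :
    ∃ D' : Decomposition G v₁ ν, D'.cost δ ≤ D.cost 1 := by
  obtain ⟨k, hk⟩ := D.exists_edges_eq_edgeFinset
  refine ⟨D.concentrate k D.mixture (fun x hx => ?_) (hk ▸ D.mixture_mem_TE)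
    D.invariant_mixture, ?_⟩
  · exact hk ▸ D.memVerts_edgeFinset_of_ne_zero hx
  · have hphat : phat G δ G.edgeFinset = phat G 1 G.edgeFinset := by
      funext x y
      rw [phat_edgeFinset G hδ, phat_edgeFinset G one_ne_zero]
    rw [cost_concentrate, hk, hphat]
    exact D.relEntInt_mixture_le

end Decomposition

variable (G : SimpleGraph V) [DecidableRel G.Adj] (v₁ : V) {δ δ' : ℝ} (ν : ProbMeas V)

theorem Ifun_eq_iInf_cost (δ : ℝ) :
    Ifun G v₁ δ ν = ⨅ D : Decomposition G v₁ ν, D.cost δ := by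
  refine le_antisymm (le_iInf fun D => sInf_le ?_) (le_sInf ?_)
  · exact ⟨D.meas, D.weight, D.edges, D.kernel, D.edges_mem, D.weight_nonneg, D.sum_weight,
      D.memVerts_of_meas_ne_zero, D.sum_weight_mul_meas, D.kernel_mem, D.invariant, rfl⟩
  · rintro c ⟨νs, r, Es, qs, hEs, hr, hr_sum, hsupp, hν, hqs, hinv, rfl⟩
    exact iInf_le (fun D : Decomposition G v₁ ν => D.cost δ)
      ⟨νs, r, Es, qs, hEs, hr, hr_sum, hsupp, hν, hqs, hinv⟩

theorem Ifun_anti (hδ : 0 < δ) (hδδ' : δ ≤ δ') : Ifun G v₁ δ' ν ≤ Ifun G v₁ δ ν := by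
  rw [Ifun_eq_iInf_cost, Ifun_eq_iInf_cost]
  exact iInf_mono fun D => D.cost_anti hδ hδδ'

theorem Ifun_le_Ifun_one (hδ : δ ≠ 0) : Ifun G v₁ δ ν ≤ Ifun G v₁ 1 ν := by
  rw [Ifun_eq_iInf_cost, Ifun_eq_iInf_cost]
  exact iInf_mono' fun D => D.exists_cost_le_cost_one hδ

theorem orrw_rate_eq_of_lt_one_general (hδ : 0 < δ) (hδ1 : δ < 1) :
    Ifun G v₁ δ ν = Ifun G v₁ 1 ν :=
  le_antisymm (Ifun_le_Ifun_one G v₁ ν hδ.ne') (Ifun_anti G v₁ ν hδ hδ1.le)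

end Decomposition

/-- `I_δ ≡ I₁` for every `δ ∈ (0,1)`. -/
theorem orrw_rate_eq_of_lt_one {V : Type} [Fintype V] [DecidableEq V]
    (G : SimpleGraph V) [DecidableRel G.Adj] (hG : G.Connected)
    (hV : 3 ≤ Fintype.card V) (v₁ : V) (δ : ℝ) (hδ : 0 < δ) (hδ1 : δ < 1) :
    ∀ ν : ProbMeas V, Ifun G v₁ δ ν = Ifun G v₁ 1 ν := by
  exact fun ν => orrw_rate_eq_of_lt_one_general G v₁ ν hδ hδ1

end ORRW
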